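/- arXiv:1909.10898 — 2 statements merged into one kernel-verified Lean document; each statement's English description precedes it below -/
import Mathlib

section
/- Let p be a prime, q = p^a a prime power, F_q the finite field with q elements, b ∈ F_q, and k a positive integer with p ∣ k. Then q·P̂_k(b) = binom(q+k−1, k) + v(b)·binom(q/p + k/p − 1, k/p). (Moreover, if p ∤ k, then q·P̂_k(b) = binom(q+k−1, k).) -/
/-!
By orthogonality of characters, `|G|` times the number of multisets with sum `b` is
`∑ ψ, ψ (-b) * h_k(ψ)`, where `h_k(ψ)` is the complete homogeneous symmetric sum of degree `k` in
the values of `ψ`, that is, the coefficient of `X ^ k` in `∏ x, (1 - ψ x * X)⁻¹`. A character of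
order `d` takes each `d`-th root of unity as a value `|G| / d` times, so this product is
`(1 - X ^ d) ^ (-|G| / d)`. In an elementary abelian `p`-group the trivial character contributes the
first binomial coefficient of the formula, and all the others share the second one.
-/

open PowerSeries Finset
open Polynomial (nthRootsFinset mem_nthRootsFinset)

section SymmetricSums

theorem coeff_prod_mk_pow_eq_sum_sym {σ R : Type*} [Fintype σ] [DecidableEq σ] [CommSemiring R]
    (f : σ → R) (k : ℕ) :
    coeff k (∏ x, (mk fun n => f x ^ n : R⟦X⟧)) =
      ∑ m : Sym σ k, ((m : Multiset σ).map f).prod := by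
  have mem_antidiag (l : σ →₀ ℕ) : l ∈ finsuppAntidiag univ k ↔ l.sum (fun _ => id) = k := by
    simp [mem_finsuppAntidiag, Finsupp.sum_fintype]
  let _ : Fintype {l : σ →₀ ℕ // l.sum (fun _ => id) = k} := .ofEquiv _ (Sym.equivNatSum σ k)
  calc
    _ = ∑ l ∈ finsuppAntidiag univ k, ∏ x, f x ^ l x := by
      simp only [PowerSeries.coeff_prod, coeff_mk]
    _ = ∑ l : {l : σ →₀ ℕ // l.sum (fun _ => id) = k}, ∏ x, f x ^ (l : σ →₀ ℕ) x :=
      sum_subtype _ mem_antidiag _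
    _ = ∑ m : Sym σ k, ∏ x, f x ^ (m : Multiset σ).count x :=
      ((Sym.equivNatSum σ k).sum_comp _).symm
    _ = _ := sum_congr rfl fun m _ => by
      rw [prod_multiset_map_count]
      exact (prod_subset (subset_univ _) fun x _ hx => by
        rw [Multiset.count_eq_zero_of_notMem (by simpa using hx), pow_zero]).symm

variable {R : Type*} [CommRing R]

theorem mk_pow_mul_one_sub_C_mul_X (r : R) :
    (mk fun n => r ^ n : R⟦X⟧) * (1 - C r * X) = 1 := by
  simpa [rescale_mk, rescale_X] using congrArg (rescale r) (mk_one_mul_one_sub_eq_one R)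

variable (R) in
theorem coeff_invOneSubPow (n k : ℕ) :
    coeff k (invOneSubPow R n : R⟦X⟧) = n.multichoose k := by
  cases n with
  | zero => cases k <;> simp [invOneSubPow_zero, PowerSeries.coeff_one]
  | succ n =>
    rw [invOneSubPow_val_succ_eq_mk_add_choose, coeff_mk, Nat.multichoose_eq,
      Nat.add_right_comm, Nat.add_sub_cancel, Nat.choose_symm_add]

theorem coeff_of_mul_one_sub_X_pow_pow_eq_one {d : ℕ} (hd : d ≠ 0) {n : ℕ} {φ : R⟦X⟧}
    (hφ : φ * (1 - X ^ d) ^ n = 1) (k : ℕ) :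
    coeff k φ = if d ∣ k then (n.multichoose (k / d) : R) else 0 := by
  have hinv : (1 - X ^ d) ^ n * expand d hd (invOneSubPow R n : R⟦X⟧) = 1 := by
    have := congrArg (expand d hd) (invOneSubPow R n).inv_val
    rwa [invOneSubPow_inv_eq_one_sub_pow, map_mul, map_pow, map_sub, map_one, expand_X] at this
  rw [left_inv_eq_right_inv hφ hinv, PowerSeries.coeff_expand, coeff_invOneSubPow]

end SymmetricSums

section AddChar

theorem addChar_multiset_sum {A M : Type*} [AddCommMonoid A] [CommMonoid M] (ψ : AddChar A M)
    (m : Multiset A) : ψ m.sum = (m.map ψ).prod :=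
  map_multiset_sum ψ.toAddMonoidHom m

theorem addChar_apply_pow_orderOf {A M : Type*} [AddMonoid A] [CommMonoid M] (ψ : AddChar A M)
    (x : A) : ψ x ^ orderOf ψ = 1 := by
  rw [← AddChar.pow_apply, pow_orderOf_eq_one, AddChar.one_apply]

theorem addChar_pow_eq_one_of_nsmul_eq_zero {A M : Type*} [AddMonoid A] [CommMonoid M] {n : ℕ}
    (hn : ∀ x : A, n • x = 0) (ψ : AddChar A M) : ψ ^ n = 1 := by
  ext x
  rw [AddChar.pow_apply, ← AddChar.map_nsmul_eq_pow, hn, AddChar.map_zero_eq_one, AddChar.one_apply]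

theorem orderOf_addChar_pos {G M : Type*} [AddGroup G] [Finite G] [CommMonoid M]
    (ψ : AddChar G M) : 0 < orderOf ψ :=
  orderOf_pos_iff.2 <| isOfFinOrder_iff_pow_eq_one.2
    ⟨Nat.card G, Nat.card_pos, addChar_pow_eq_one_of_nsmul_eq_zero (fun _ => card_nsmul_eq_zero') ψ⟩

theorem orderOf_addChar_eq_prime {A M : Type*} [AddMonoid A] [CommMonoid M] {p : ℕ}
    (hp : p.Prime) (hA : ∀ x : A, p • x = 0) {ψ : AddChar A M} (hψ : ψ ≠ 1) : orderOf ψ = p :=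
  have := Fact.mk hp
  orderOf_eq_prime (addChar_pow_eq_one_of_nsmul_eq_zero hA ψ) hψ

variable {G R : Type*} [AddGroup G] [CommRing R] [IsDomain R]

theorem exists_isPrimitiveRoot_addChar_apply [Finite G] (ψ : AddChar G R) :
    ∃ x, IsPrimitiveRoot (ψ x) (orderOf ψ) := by
  let f : Multiplicative G →* Rˣ := ψ.toMonoidHom.toHomUnits
  have : Finite f.range := inferInstanceAs (Finite (Set.range f))
  obtain ⟨⟨_, x, rfl⟩, hx⟩ := IsCyclic.exists_monoid_generator (α := f.range)
  have exists_pow_eq (y : G) : ∃ j : ℕ, ψ x.toAdd ^ j = ψ y := by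
    obtain ⟨j, hj⟩ := hx ⟨_, Multiplicative.ofAdd y, rfl⟩
    exact ⟨j, by simpa [f, Subtype.ext_iff, Units.ext_iff] using hj⟩
  refine ⟨x.toAdd, addChar_apply_pow_orderOf ψ _, fun l hl => orderOf_dvd_of_pow_eq_one ?_⟩
  ext y
  obtain ⟨j, hj⟩ := exists_pow_eq y
  rw [AddChar.pow_apply, ← hj, pow_right_comm, hl, one_pow, AddChar.one_apply]

theorem addChar_apply_mem_nthRootsFinset [Finite G] (ψ : AddChar G R) (x : G) :
    ψ x ∈ nthRootsFinset (orderOf ψ) (1 : R) :=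
  (mem_nthRootsFinset (orderOf_addChar_pos ψ) 1).2 (addChar_apply_pow_orderOf ψ x)

variable [Fintype G]

theorem card_addChar_fiber [DecidableEq R] (ψ : AddChar G R) {ζ : R} (hζ : ζ ^ orderOf ψ = 1) :
    #{x | ψ x = ζ} = Fintype.card G / orderOf ψ := by
  have hpos := orderOf_addChar_pos ψ
  obtain ⟨x, hprim⟩ := exists_isPrimitiveRoot_addChar_apply ψ
  have mem_range {ξ : R} (hξ : ξ ^ orderOf ψ = 1) : ξ ∈ Set.range ψ := by
    have := NeZero.of_pos hpos
    obtain ⟨j, -, rfl⟩ := hprim.eq_pow_of_pow_eq_one hξ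
    exact ⟨j • x, ψ.map_nsmul_eq_pow j x⟩
  have card_eq {ξ : R} (hξ : ξ ^ orderOf ψ = 1) : #{x | ψ x = ξ} = #{x | ψ x = ζ} :=
    AddMonoidHom.card_fiber_eq_of_mem_range ψ.toAddMonoidHom (mem_range hξ) (mem_range hζ)
  refine (Nat.div_eq_of_eq_mul_right hpos ?_).symm
  calc
    Fintype.card G = ∑ ξ ∈ nthRootsFinset (orderOf ψ) (1 : R), #{x | ψ x = ξ} :=
      card_eq_sum_card_fiberwise fun y _ => addChar_apply_mem_nthRootsFinset ψ y
    _ = orderOf ψ * #{x | ψ x = ζ} := by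
      rw [sum_const_nat fun ξ hξ => card_eq ((mem_nthRootsFinset hpos 1).1 hξ),
        hprim.card_nthRootsFinset]

theorem prod_sub_addChar_mul (ψ : AddChar G R) (r s : R) :
    ∏ x, (r - ψ x * s) = (r ^ orderOf ψ - s ^ orderOf ψ) ^ (Fintype.card G / orderOf ψ) := by
  classical
  have hpos := orderOf_addChar_pos ψ
  obtain ⟨_, hprim⟩ := exists_isPrimitiveRoot_addChar_apply ψ
  calc
    _ = ∏ ζ ∈ nthRootsFinset (orderOf ψ) (1 : R), ∏ x with ψ x = ζ, (r - ζ * s) :=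
      (prod_fiberwise_of_maps_to' (fun x _ => addChar_apply_mem_nthRootsFinset ψ x)
        fun ζ => r - ζ * s).symm
    _ = ∏ ζ ∈ nthRootsFinset (orderOf ψ) (1 : R),
          (r - ζ * s) ^ (Fintype.card G / orderOf ψ) :=
      prod_congr rfl fun ζ hζ => by
        rw [prod_const, card_addChar_fiber ψ ((mem_nthRootsFinset hpos 1).1 hζ)]
    _ = _ := by rw [Finset.prod_pow, hprim.pow_sub_pow_eq_prod_sub_mul r s hpos]

theorem prod_one_sub_C_addChar_mul_X (ψ : AddChar G R) :
    ∏ x, (1 - C (ψ x) * X : R⟦X⟧) =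
      (1 - X ^ orderOf ψ) ^ (Fintype.card G / orderOf ψ) := by
  -- `R⟦X⟧` is again a domain, so `ψ` can be viewed as a character with values in it.
  let Ψ : AddChar G R⟦X⟧ := (C : R →+* R⟦X⟧).toMonoidHom.compAddChar ψ
  have hΨ : orderOf Ψ = orderOf ψ := orderOf_eq_orderOf_iff.2 fun n => by
    have hC (x : G) : (Ψ ^ n) x = C ((ψ ^ n) x) := (map_pow C _ _).symm
    simp only [AddChar.eq_one_iff, hC, map_eq_one_iff _ C_injective]
  have hprod := prod_sub_addChar_mul Ψ 1 X
  rwa [hΨ, one_pow] at hprod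

end AddChar

theorem sum_sym_addChar {G R : Type*} [AddCommGroup G] [Fintype G] [DecidableEq G] [CommRing R]
    [IsDomain R] (ψ : AddChar G R) (k : ℕ) :
    ∑ m : Sym G k, ψ (m : Multiset G).sum =
      if orderOf ψ ∣ k then
        ((Fintype.card G / orderOf ψ).multichoose (k / orderOf ψ) : R)
      else 0 := by
  simp only [addChar_multiset_sum, ← coeff_prod_mk_pow_eq_sum_sym]
  refine coeff_of_mul_one_sub_X_pow_pow_eq_one (orderOf_addChar_pos ψ).ne' ?_ k
  rw [← prod_one_sub_C_addChar_mul_X, ← prod_mul_distrib]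
  exact prod_eq_one fun x _ => mk_pow_mul_one_sub_C_mul_X (ψ x)

section Counting

variable {G : Type*} [AddCommGroup G] [Fintype G] [DecidableEq G]

theorem card_mul_card_filter_eq_sum_addChar {ι : Type*} (s : Finset ι) (f : ι → G) (b : G) :
    (Fintype.card G : ℂ) * #{i ∈ s | f i = b} =
      ∑ ψ : AddChar G ℂ, ψ (-b) * ∑ i ∈ s, ψ (f i) := by
  have sum_eq_ite (i : ι) : ∑ ψ : AddChar G ℂ, ψ (-b) * ψ (f i) =
      if f i = b then (Fintype.card G : ℂ) else 0 := by
    simp only [← AddChar.map_add_eq_mul, AddChar.sum_apply_eq_ite, neg_add_eq_zero, eq_comm]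
  simp only [mul_sum]
  rw [sum_comm, sum_congr rfl fun i _ => sum_eq_ite i, ← sum_filter, sum_const, nsmul_eq_mul,
    mul_comm]

theorem card_mul_card_sym_sum_eq {p : ℕ} (hp : p.Prime) (hG : ∀ x : G, p • x = 0) (b : G) (k : ℕ) :
    (Fintype.card G : ℤ) * #{m : Sym G k | (m : Multiset G).sum = b} =
      (Fintype.card G).multichoose k +
        (if b = 0 then (Fintype.card G : ℤ) - 1 else -1) *
          if p ∣ k then ((Fintype.card G / p).multichoose (k / p) : ℤ) else 0 := by
  let c : ℤ := if p ∣ k then ((Fintype.card G / p).multichoose (k / p) : ℤ) else 0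
  have sum_of_ne (ψ : AddChar G ℂ) (hψ : ψ ∈ univ.erase 1) :
      ∑ m : Sym G k, ψ (m : Multiset G).sum = c := by
    rw [sum_sym_addChar, orderOf_addChar_eq_prime hp hG (ne_of_mem_erase hψ)]
    simp only [c, Int.cast_ite, Int.cast_natCast, Int.cast_zero]
  have sum_characters : 1 + ∑ ψ ∈ univ.erase (1 : AddChar G ℂ), ψ (-b) =
      if b = 0 then (Fintype.card G : ℂ) else 0 := by
    have := add_sum_erase univ (fun ψ : AddChar G ℂ => ψ (-b)) (mem_univ 1)
    simpa only [AddChar.one_apply, AddChar.sum_apply_eq_ite, neg_eq_zero] using this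
  have complex_identity := calc
    (Fintype.card G : ℂ) * #{m : Sym G k | (m : Multiset G).sum = b}
      = ∑ ψ : AddChar G ℂ, ψ (-b) * ∑ m : Sym G k, ψ (m : Multiset G).sum :=
        card_mul_card_filter_eq_sum_addChar univ _ b
    _ = (Fintype.card G).multichoose k + (∑ ψ ∈ univ.erase (1 : AddChar G ℂ), ψ (-b)) * c := by
        rw [← add_sum_erase _ _ (mem_univ (1 : AddChar G ℂ)), sum_mul,
          sum_congr rfl fun ψ hψ => congrArg _ (sum_of_ne ψ hψ), sum_sym_addChar]
        simp
    _ = (Fintype.card G).multichoose k +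
          (if b = 0 then (Fintype.card G : ℂ) - 1 else -1) * c := by
        rw [eq_sub_of_add_eq' sum_characters]
        split_ifs <;> simp
  change _ = _ + _ * c
  exact_mod_cast complex_identity

end Counting

theorem multisets_finite_field_sum_general {G : Type*} [AddCommGroup G] [Fintype G] [DecidableEq G]
    {p : ℕ} (hp : p.Prime) (hG : ∀ x : G, p • x = 0) (b : G) (k : ℕ) :
    (p ∣ k →
      (Fintype.card G : ℤ) * #{m : Sym G k | (m : Multiset G).sum = b} =
        ((Fintype.card G + k - 1).choose k : ℤ) +
          (if b = 0 then (Fintype.card G : ℤ) - 1 else -1) *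
            ((Fintype.card G / p + k / p - 1).choose (k / p) : ℤ)) ∧
    (¬ p ∣ k →
      (Fintype.card G : ℤ) * #{m : Sym G k | (m : Multiset G).sum = b} =
        ((Fintype.card G + k - 1).choose k : ℤ)) := by
  simp only [← Nat.multichoose_eq, card_mul_card_sym_sum_eq hp hG]
  exact ⟨fun h => by rw [if_pos h], fun h => by rw [if_neg h, mul_zero, add_zero]⟩

/-- **Counting all multisets of size `k` over `F_q` with a given sum.**  For `q = p^a`,
`b ∈ F_q` and `k ≥ 1`: if `p ∣ k`, then
`q·P̂_k(b) = C(q+k−1, k) + v(b)·C(q/p + k/p − 1, k/p)`, and if `p ∤ k`, then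
`q·P̂_k(b) = C(q+k−1, k)`.  Here `P̂_k(b)` is the number of multisets of `k` elements of
`F_q` (zero allowed) with sum `b`, and `v(b) = q−1` if `b = 0`, `v(b) = −1` otherwise. -/
theorem multisets_finite_field_sum (p a : ℕ) (hp : p.Prime) (ha : 0 < a)
    (F : Type*) [Field F] [Fintype F] [DecidableEq F] (hF : Fintype.card F = p ^ a)
    (b : F) (k : ℕ) (hk : 0 < k) :
    (p ∣ k →
      (p ^ a : ℤ) * ((Finset.univ.filter fun m : Sym F k =>
          (m : Multiset F).sum = b).card : ℤ) =
        ((p ^ a + k - 1).choose k : ℤ) +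
          (if b = 0 then (p ^ a : ℤ) - 1 else -1) *
            ((p ^ a / p + k / p - 1).choose (k / p) : ℤ)) ∧
    (¬ p ∣ k →
      (p ^ a : ℤ) * ((Finset.univ.filter fun m : Sym F k =>
          (m : Multiset F).sum = b).card : ℤ) =
        ((p ^ a + k - 1).choose k : ℤ)) := by
  have : CharP F p := have := Fact.mk hp; charP_of_card_eq_prime_pow hF
  simpa [hF] using multisets_finite_field_sum_general hp (by simp [nsmul_eq_mul]) b k
end

section
/- Let q and n be coprime positive integers with q ≥ 2. Let N be the set of cyclic necklaces of length n with at most q colors, i.e. the set of orbits of functions {1,…,n} → {1,…,q} under the action of the cyclic group of order n by cyclic rotation of the domain, and let F be the set of all multisets of elements of ℤ/nℤ whose elements sum to 0 and in which every element has multiplicity strictly less than q. Then |N| = |F| = (1/n)·Σ_{e ∣ n} φ(e)·q^{n/e}, where the sum is over positive divisors e of n and φ is Euler's totient function. -/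
/-- Two colorings `f g : ℤ/nℤ → Fin q` give the same necklace iff one is a cyclic
rotation of the other. -/
def necklaceRel (n q : ℕ) (f g : ZMod n → Fin q) : Prop :=
  ∃ r : ZMod n, ∀ i : ZMod n, f i = g (i + r)

/-!
Both numbers, multiplied by `n`, equal `∑ g, q ^ (n / ord g)`, and this holds with any finite
abelian group `G` of order `n` in place of `ℤ/nℤ`. For the necklaces this is Burnside's lemma: `g`
has `n / ord g` cycles on `G`, and a colouring fixed by `g` is a choice of colour for each of them.

A multiset is encoded by its multiplicity function `c : G → {0, …, q - 1}`. By orthogonality of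
characters, `n` times the number of `c` with `∑ c(a) a = 0` is the sum over the characters `ψ` of
`∏ a, (1 + ψ(a) + ⋯ + ψ(a) ^ (q - 1))`. The factors with `ψ(a) = 1` are equal to `q`. The others are
`(ψ(qa) - 1) / (ψ(a) - 1)`, and their product is `1` because `a ↦ qa` permutes the complement of
`ker ψ`. So `ψ` contributes `q ^ |ker ψ| = q ^ (n / ord ψ)`, and `G` is isomorphic to its character
group.
-/

open Finset

section Rotation

open AddAction

/-- The functions on `X` fixed by the translation `g`, seen as functions on the set of cycles
of `g`; in the encoding, the cycles are the orbits of the subgroup generated by `g`, and `Gᵈᵃᵃ`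
acts on `X → α` by translating the argument. -/
def fixedByEquivOrbitsArrow {G X : Type*} [AddGroup G] [AddAction G X] (α : Type*) (g : G) :
    fixedBy (X → α) (DomAddAct.mk g) ≃
      (orbitRel.Quotient (AddSubgroup.zmultiples g) X → α) where
  toFun f := Quotient.lift f.1 <| by
    rintro _ x ⟨⟨_, k, rfl⟩, rfl⟩
    exact congrFun (mem_fixedBy_zmultiples_iff_mem_fixedBy.mpr f.2 k) x
  invFun φ := ⟨fun x => φ (Quotient.mk'' x), funext fun x =>
    congrArg φ (Quotient.sound ⟨⟨g, AddSubgroup.mem_zmultiples g⟩, rfl⟩)⟩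
  left_inv _ := rfl
  right_inv φ := funext fun x => Quotient.inductionOn' x fun _ => rfl

theorem card_orbits_arrow_mul_card (G X α : Type*) [AddGroup G] [Fintype G] [AddAction G X]
    [Finite X] [Finite α] :
    Nat.card (orbitRel.Quotient Gᵈᵃᵃ (X → α)) * Nat.card G =
      ∑ g : G, Nat.card α ^ Nat.card (orbitRel.Quotient (AddSubgroup.zmultiples g) X) := by
  classical
  have := Fintype.ofFinite X
  have := Fintype.ofFinite α
  have := Fintype.ofEquiv G DomAddAct.mk
  have := Fintype.ofFinite (orbitRel.Quotient Gᵈᵃᵃ (X → α))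
  have burnside := sum_card_fixedBy_eq_card_orbits_mul_card_addGroup Gᵈᵃᵃ (X → α)
  simp only [← Nat.card_eq_fintype_card] at burnside
  rw [Nat.card_congr (DomAddAct.mk (M := G)), ← burnside, ← DomAddAct.mk.sum_comp]
  refine sum_congr rfl fun g _ => ?_
  rw [Nat.card_congr (fixedByEquivOrbitsArrow α g), Nat.card_fun]

theorem card_orbits_zmultiples {G : Type*} [AddGroup G] [Finite G] (g : G) :
    Nat.card (orbitRel.Quotient (AddSubgroup.zmultiples g) G) = Nat.card G / addOrderOf g := by
  refine (Nat.div_eq_of_eq_mul_left (addOrderOf_pos g) ?_).symm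
  rw [← Nat.card_zmultiples, AddSubgroup.card_eq_card_quotient_mul_card_addSubgroup,
    ← Nat.card_congr (QuotientAddGroup.quotientRightRelEquivQuotientLeftRel _)]
  rfl

theorem card_quot_necklaceRel (n q : ℕ) :
    Nat.card (Quot (necklaceRel n q)) =
      Nat.card (orbitRel.Quotient (ZMod n)ᵈᵃᵃ (ZMod n → Fin q)) := by
  refine Nat.card_congr (Quot.congrRight fun f g => ?_)
  rw [orbitRel_apply]
  refine DomAddAct.mk.exists_congr fun r => ?_
  simp [funext_iff, DomAddAct.vadd_apply, add_comm, eq_comm]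

end Rotation

section Characters

/-- The additive characters `A → R` as homomorphisms into the unit group of `R`, the form in which
Mathlib states the duality of finite abelian groups. -/
def addCharMulEquivUnitsHom (A R : Type*) [AddGroup A] [CommMonoid R] :
    AddChar A R ≃* (Multiplicative A →* Rˣ) :=
  AddChar.toMonoidHomMulEquiv.trans MonoidHom.toHomUnitsMulEquiv

theorem nonempty_mulEquiv_addChar (G : Type*) [AddCommGroup G] [Finite G] :
    Nonempty (Multiplicative G ≃* AddChar G ℂ) := by
  obtain ⟨e⟩ := CommGroup.monoidHom_mulEquiv_of_hasEnoughRootsOfUnity (Multiplicative G) ℂ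
  exact ⟨e.symm.trans (addCharMulEquivUnitsHom G ℂ).symm⟩

theorem sum_comp_orderOf_addChar {G M : Type*} [AddCommGroup G] [Fintype G] [AddCommMonoid M]
    (f : ℕ → M) : ∑ ψ : AddChar G ℂ, f (orderOf ψ) = ∑ g : G, f (addOrderOf g) := by
  obtain ⟨e⟩ := nonempty_mulEquiv_addChar G
  refine (Fintype.sum_equiv (Multiplicative.ofAdd.trans e.toEquiv) _ _ fun g => ?_).symm
  simp [e.orderOf_eq]

theorem card_range_eq_orderOf {G H : Type*} [Group G] [CommGroup H] (f : G →* H)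
    [IsCyclic f.range] : Nat.card f.range = orderOf f := by
  rw [← IsCyclic.exponent_eq_card]
  refine Nat.dvd_right_iff_eq.mp fun k => ?_
  simp [Monoid.exponent_dvd_iff_forall_pow_eq_one, orderOf_dvd_iff_pow_eq_one, MonoidHom.ext_iff,
    Subtype.ext_iff]

theorem card_addChar_eq_one {G R : Type*} [AddGroup G] [Fintype G] [CommRing R] [IsDomain R]
    [DecidableEq R] (ψ : AddChar G R) : #{a | ψ a = 1} = Nat.card G / orderOf ψ := by
  set f := addCharMulEquivUnitsHom G R ψ
  have hrange : Nat.card f.range = orderOf ψ := by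
    rw [card_range_eq_orderOf, MulEquiv.orderOf_eq]
  have hker : Nat.card f.ker = #{a | ψ a = 1} := by
    rw [← Fintype.card_subtype, ← Nat.card_eq_fintype_card]
    exact Nat.card_congr (Multiplicative.toAdd.subtypeEquiv fun a => Units.ext_iff)
  rw [← hker, ← hrange, ← Subgroup.index_ker]
  exact (Nat.div_eq_of_eq_mul_left (Nat.pos_of_ne_zero f.ker.index_ne_zero_of_finite)
    f.ker.card_mul_index.symm).symm

theorem prod_addChar_ne_one_comp_pow {G R M : Type*} [AddGroup G] [Fintype G] [Monoid R]
    [DecidableEq R] [CommMonoid M] {q : ℕ} (hco : (Nat.card G).Coprime q) (ψ : AddChar G R)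
    (F : R → M) : ∏ a with ψ a ≠ 1, F (ψ a ^ q) = ∏ a with ψ a ≠ 1, F (ψ a) := by
  have hpow (a : G) : ψ (nsmulCoprime hco a) = ψ a ^ q := AddChar.map_nsmul_eq_pow ψ q a
  have hcard (a : G) : ψ a ^ Nat.card G = 1 := by
    rw [← AddChar.map_nsmul_eq_pow, card_nsmul_eq_zero', AddChar.map_zero_eq_one]
  have hone (a : G) : ψ a ^ q = 1 ↔ ψ a = 1 :=
    (and_iff_right (hcard a)).symm.trans (pow_eq_one_iff_of_coprime hco)
  refine prod_equiv (nsmulCoprime hco) (fun a => ?_) fun a _ => by rw [hpow]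
  rw [mem_filter_univ, mem_filter_univ, hpow, Ne, Ne, hone]

theorem prod_geom_sum_addChar {G R : Type*} [AddGroup G] [Fintype G] [CommRing R] [IsDomain R]
    [DecidableEq R] {q : ℕ} (hco : (Nat.card G).Coprime q) (ψ : AddChar G R) :
    ∏ a, ∑ j : Fin q, ψ a ^ (j : ℕ) = (q : R) ^ #{a | ψ a = 1} := by
  have hker : ∏ a with ψ a = 1, ∑ j : Fin q, ψ a ^ (j : ℕ) = (q : R) ^ #{a | ψ a = 1} :=
    prod_eq_pow_card fun a ha => by simp [(mem_filter.mp ha).2]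
  have hne : ∏ a with ψ a ≠ 1, (ψ a - 1) ≠ 0 :=
    prod_ne_zero_iff.mpr fun a ha => sub_ne_zero.mpr (mem_filter.mp ha).2
  have hgeom (a : G) : (∑ j : Fin q, ψ a ^ (j : ℕ)) * (ψ a - 1) = ψ a ^ q - 1 := by
    rw [Fin.sum_univ_eq_sum_range (ψ a ^ ·), geom_sum_mul]
  have hcompl : ∏ a with ψ a ≠ 1, ∑ j : Fin q, ψ a ^ (j : ℕ) = 1 := by
    refine mul_right_cancel₀ hne ?_
    simp only [← prod_mul_distrib, hgeom, one_mul]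
    exact prod_addChar_ne_one_comp_pow hco ψ (· - 1)
  rw [← prod_filter_mul_prod_filter_not univ (fun a => ψ a = 1), hker, hcompl, mul_one]

theorem addChar_sum_nsmul {ι A R : Type*} [AddCommMonoid A] [CommMonoid R] (ψ : AddChar A R)
    (s : Finset ι) (c : ι → ℕ) (x : ι → A) :
    ψ (∑ i ∈ s, c i • x i) = ∏ i ∈ s, ψ (x i) ^ c i := by
  simp only [← AddChar.map_nsmul_eq_pow]
  exact map_prod ψ.toMonoidHom (fun i => Multiplicative.ofAdd (c i • x i)) s

theorem card_mul_card_fiber_zero {G X : Type*} [AddCommGroup G] [Finite G] [DecidableEq G]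
    [Fintype X] (s : X → G) :
    (Nat.card G * #{x | s x = 0} : ℂ) = ∑ ψ : AddChar G ℂ, ∑ x, ψ (s x) := by
  have := Fintype.ofFinite G
  rw [sum_comm]
  simp only [AddChar.sum_apply_eq_ite, ← sum_filter, sum_const, nsmul_eq_mul,
    Nat.card_eq_fintype_card, mul_comm]

end Characters

section ZeroSum

/-- A multiset over a finite type with all multiplicities less than `q`, encoded by its
multiplicity function. -/
def boundedMultisetEquiv (α : Type*) [Fintype α] [DecidableEq α] (q : ℕ) :
    {m : Multiset α // ∀ a, m.count a < q} ≃ (α → Fin q) where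
  toFun m a := ⟨m.1.count a, m.2 a⟩
  invFun c := ⟨∑ a, (c a : ℕ) • {a}, fun a => by
    simp [Multiset.count_sum', Multiset.count_singleton]⟩
  left_inv m := Subtype.ext <| Multiset.ext' fun a => by
    simp [Multiset.count_sum', Multiset.count_singleton]
  right_inv c := funext fun a => Fin.ext <| by
    simp [Multiset.count_sum', Multiset.count_singleton]

theorem ncard_bounded_multisets_sum_eq {A : Type*} [AddCommMonoid A] [Fintype A] [DecidableEq A]
    (q : ℕ) (s : A) :
    {m : Multiset A | m.sum = s ∧ ∀ a, m.count a < q}.ncard =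
      #{c : A → Fin q | ∑ a, (c a : ℕ) • a = s} := by
  have hsum (m : {m : Multiset A // ∀ a, m.count a < q}) :
      m.1.sum = s ↔ ∑ a, (boundedMultisetEquiv A q m a : ℕ) • a = s := by
    rw [sum_multiset_count_of_subset m.1 univ (subset_univ _)]
    rfl
  rw [← Fintype.card_subtype, ← Nat.card_eq_fintype_card]
  simp only [and_comm (a := Multiset.sum _ = s)]
  exact Nat.card_congr <| (Equiv.subtypeSubtypeEquivSubtypeInter _ _).symm.trans <|
    (boundedMultisetEquiv A q).subtypeEquiv hsum

theorem card_mul_ncard_zero_sum_multisets {G : Type*} [AddCommGroup G] [Fintype G]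
    [DecidableEq G] {q : ℕ} (hco : (Nat.card G).Coprime q) :
    Nat.card G * {m : Multiset G | m.sum = 0 ∧ ∀ a, m.count a < q}.ncard =
      ∑ g : G, q ^ (Nat.card G / addOrderOf g) := by
  rw [ncard_bounded_multisets_sum_eq, ← sum_comp_orderOf_addChar fun d => q ^ (Nat.card G / d)]
  have hchar (ψ : AddChar G ℂ) : ∑ c : G → Fin q, ψ (∑ a, (c a : ℕ) • a) =
      (q : ℂ) ^ (Nat.card G / orderOf ψ) := by
    simp only [addChar_sum_nsmul]
    rw [← card_addChar_eq_one, ← prod_geom_sum_addChar hco, prod_univ_sum, Fintype.piFinset_univ]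
  exact_mod_cast (card_mul_card_fiber_zero _).trans (sum_congr rfl fun ψ _ => hchar ψ)

end ZeroSum

theorem sum_comp_addOrderOf {G M : Type*} [AddGroup G] [IsAddCyclic G] [Fintype G]
    [AddCommMonoid M] (f : ℕ → M) :
    ∑ g : G, f (addOrderOf g) = ∑ e ∈ (Nat.card G).divisors, e.totient • f e := by
  have horder : ∀ g ∈ (univ : Finset G), addOrderOf g ∈ (Nat.card G).divisors := fun g _ =>
    Nat.mem_divisors.mpr ⟨addOrderOf_dvd_natCard g, Nat.card_pos.ne'⟩
  rw [← sum_fiberwise_of_maps_to' horder]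
  refine sum_congr rfl fun e he => ?_
  rw [sum_const, IsAddCyclic.card_addOrderOf_eq_totient
    (Nat.card_eq_fintype_card (α := G) ▸ Nat.dvd_of_mem_divisors he)]

theorem necklaces_eq_zero_sum_multisets_general {G : Type*} [AddCommGroup G] [Fintype G]
    [DecidableEq G] {q : ℕ} (hco : q.Coprime (Nat.card G)) :
    Nat.card (AddAction.orbitRel.Quotient Gᵈᵃᵃ (G → Fin q)) =
      {m : Multiset G | m.sum = 0 ∧ ∀ a, m.count a < q}.ncard ∧
    Nat.card G * {m : Multiset G | m.sum = 0 ∧ ∀ a, m.count a < q}.ncard =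
      ∑ g : G, q ^ (Nat.card G / addOrderOf g) := by
  have hmultisets := card_mul_ncard_zero_sum_multisets hco.symm
  refine ⟨Nat.eq_of_mul_eq_mul_left (Nat.card_pos (α := G)) ?_, hmultisets⟩
  rw [hmultisets, mul_comm, card_orbits_arrow_mul_card]
  simp only [card_orbits_zmultiples, Nat.card_fin]

/-- **Necklaces and zero-sum multisets are equinumerous.**  For coprime `q ≥ 2` and
`n ≥ 1`, the number of cyclic necklaces of length `n` with at most `q` colors equals the
number of multisets over `ℤ/nℤ` with zero sum and every multiplicity strictly less than
`q`, and `n` times this common value is `Σ_{e ∣ n} φ(e)·q^{n/e}`. -/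
theorem necklaces_eq_zero_sum_multisets (n q : ℕ) [NeZero n] (hn : 1 ≤ n) (hq : 2 ≤ q)
    (hco : Nat.Coprime q n) :
    Nat.card (Quot (necklaceRel n q)) =
      Set.ncard {m : Multiset (ZMod n) | m.sum = 0 ∧ ∀ a : ZMod n, m.count a < q} ∧
    n * Set.ncard {m : Multiset (ZMod n) | m.sum = 0 ∧ ∀ a : ZMod n, m.count a < q} =
      ∑ e ∈ n.divisors, Nat.totient e * q ^ (n / e) := by
  rw [← Nat.card_zmod n] at hco
  simpa only [card_quot_necklaceRel, sum_comp_addOrderOf fun d => q ^ (n / d), Nat.card_zmod,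
    smul_eq_mul] using necklaces_eq_zero_sum_multisets_general hco
end
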